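/- arXiv:1612.08476 — 6 statements merged into one kernel-verified Lean document; each statement's English description precedes it below -/
import Mathlib

section
/- Let (E, A, ⟨·,·⟩_A) be a full basic triple and (F, B, ⟨·,·⟩_B) a basic triple such that F with its associated ternary product is an admissible *-tring and F is a faithful B-module. If φ : E → F is a homomorphism between the associated *-trings, then there exists a unique *-algebra homomorphism ψ : A → B such that ψ(⟨x,y⟩_A) = ⟨φ(x),φ(y)⟩_B for all x,y ∈ E. Moreover φ(xa) = φ(x)ψ(a) for all x ∈ E, a ∈ A, and ker ψ ⊆ {a ∈ A : φ(xa) = 0 for all x ∈ E} ⊆ {a ∈ A : ψ(a)*ψ(a) = 0}, both inclusions being equalities when B is admissible as a *-algebra. If in addition E is a faithful A-module and φ is injective, then ψ is injective. -/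
noncomputable section

open scoped ComplexConjugate

/-- The axioms of a `*`-ternary ring (`*`-tring) structure on a complex vector
space: `μ` is linear in the odd variables, conjugate-linear in the middle one,
and satisfies the ternary associativity identities. -/
def IsTernaryProduct {E : Type*} [AddCommGroup E] [Module ℂ E]
    (μ : E → E → E → E) : Prop :=
  (∀ x x' y z : E, μ (x + x') y z = μ x y z + μ x' y z) ∧
  (∀ (c : ℂ) (x y z : E), μ (c • x) y z = c • μ x y z) ∧
  (∀ x y y' z : E, μ x (y + y') z = μ x y z + μ x y' z) ∧
  (∀ (c : ℂ) (x y z : E), μ x (c • y) z = conj c • μ x y z) ∧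
  (∀ x y z z' : E, μ x y (z + z') = μ x y z + μ x y z') ∧
  (∀ (c : ℂ) (x y z : E), μ x y (c • z) = c • μ x y z) ∧
  (∀ x y z u v : E, μ (μ x y z) u v = μ x (μ u z y) v) ∧
  (∀ x y z u v : E, μ x (μ u z y) v = μ x y (μ z u v))

/-- A (right) basic triple `(E, A, ⟪·,·⟫)`: a right module `E` over a complex
`*`-algebra `A`, together with an `A`-valued pairing which is conjugate-linear
in the first variable and linear in the second one, compatible with the module
structure and the involution. -/
structure BasicTriple (E A : Type*) [AddCommGroup E] [Module ℂ E]
    [NonUnitalRing A] [Module ℂ A] [StarRing A] where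
  act : E → A → E
  inner : E → E → A
  act_add_left : ∀ (x y : E) (a : A), act (x + y) a = act x a + act y a
  act_add_right : ∀ (x : E) (a b : A), act x (a + b) = act x a + act x b
  act_smul_left : ∀ (c : ℂ) (x : E) (a : A), act (c • x) a = c • act x a
  act_smul_right : ∀ (c : ℂ) (x : E) (a : A), act x (c • a) = c • act x a
  act_mul : ∀ (x : E) (a b : A), act (act x a) b = act x (a * b)
  inner_add_left : ∀ x y z : E, inner (x + y) z = inner x z + inner y z
  inner_add_right : ∀ x y z : E, inner x (y + z) = inner x y + inner x z
  inner_smul_left : ∀ (c : ℂ) (x y : E), inner (c • x) y = conj c • inner x y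
  inner_smul_right : ∀ (c : ℂ) (x y : E), inner x (c • y) = c • inner x y
  inner_mul : ∀ (x y : E) (a : A), inner x y * a = inner x (act y a)
  star_inner : ∀ x y : E, star (inner x y) = inner y x

variable {E A : Type*} [AddCommGroup E] [Module ℂ E]
    [NonUnitalRing A] [Module ℂ A] [StarRing A]

/-- The ternary product associated with a basic triple: `μ(x,y,z) = x⟪y,z⟫`. -/
def BasicTriple.mu (t : BasicTriple E A) (x y z : E) : E := t.act x (t.inner y z)

/-- The basic triple is full: `A = span{⟪x,y⟫ : x, y ∈ E}`. -/
def BasicTriple.Full (t : BasicTriple E A) : Prop :=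
  Submodule.span ℂ {a : A | ∃ x y : E, t.inner x y = a} = ⊤

/-- `E` is a faithful `A`-module. -/
def BasicTriple.Faithful (t : BasicTriple E A) : Prop :=
  ∀ a : A, (∀ x : E, t.act x a = 0) → a = 0

/-!
Were `ψ` given, its graph would be the linear span in `A × B` of the pairs `(⟪x,y⟫, ⟪φ x, φ y⟫)`.
This span is a `*`-subalgebra of `A × B`, closed under multiplication because `φ` preserves the
ternary product. If it contains `(0, b)`, then `(φ x) b = φ (x 0) = 0` for all `x`, hence `b* b = 0`
because `b*` is a combination of the `⟪φ x, φ y⟫`, and `b = 0` as soon as `B` is admissible.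
Finally, faithfulness of `F` transfers admissibility from `F` to `B`: if `b* b = 0` and `y = x b*`,
then `y⟪y,y⟫ = x (b* b)⟪x,y⟫ = 0`, so `x b* = 0` for all `x ∈ F`.
-/

theorem exists_nonUnitalStarAlgHom_of_bijective_fst {R A B : Type*} [CommSemiring R]
    [NonUnitalNonAssocSemiring A] [Module R A] [Star A]
    [NonUnitalNonAssocSemiring B] [Module R B] [Star B]
    (S : NonUnitalStarSubalgebra R (A × B)) (hS : Function.Bijective fun p : S => p.1.1) :
    ∃ ψ : A →⋆ₙₐ[R] B, ∀ a : A, (a, ψ a) ∈ S := by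
  let ι : S →⋆ₙₐ[R] A × B := NonUnitalStarSubalgebraClass.subtype S
  let e : S ≃⋆ₐ[R] A := StarAlgEquiv.ofBijective ((NonUnitalStarAlgHom.fst R A B).comp ι) hS
  refine ⟨((NonUnitalStarAlgHom.snd R A B).comp ι).comp (e.symm : A →⋆ₙₐ[R] S), fun a => ?_⟩
  have ha : (e.symm a).1 = (a, (e.symm a).1.2) := Prod.ext (e.apply_symm_apply a) rfl
  exact ha ▸ (e.symm a).2

namespace BasicTriple

section Identities

variable (t : BasicTriple E A)

theorem act_zero (x : E) : t.act x 0 = 0 := by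
  simpa using t.act_smul_right 0 x 0

theorem inner_zero_right (x : E) : t.inner x 0 = 0 := by
  simpa using t.inner_smul_right 0 x 0

theorem inner_act_left (x y : E) (a : A) :
    t.inner (t.act x a) y = star a * t.inner x y := by
  rw [← t.star_inner, ← t.inner_mul, star_mul, t.star_inner]

end Identities

theorem Faithful.eq_zero_of_star_mul_self_eq_zero {t : BasicTriple E A} (hfaith : t.Faithful)
    (hadm : ∀ x : E, t.mu x x x = 0 → x = 0) {a : A} (ha : star a * a = 0) : a = 0 := by
  refine star_eq_zero.1 (hfaith (star a) fun x => hadm _ ?_)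
  rw [mu, t.act_mul, inner_act_left, star_star, ← mul_assoc, ha, zero_mul, act_zero]

theorem Full.hom_ext {t : BasicTriple E A} (hfull : t.Full) {M G : Type*} [AddCommMonoid M]
    [Module ℂ M] [FunLike G A M] [LinearMapClass G ℂ A M] {f g : G}
    (h : ∀ x y : E, f (t.inner x y) = g (t.inner x y)) : f = g := by
  have hlin : (f : A →ₗ[ℂ] M) = g :=
    LinearMap.ext_on hfull (by rintro _ ⟨x, y, rfl⟩; exact h x y)
  exact DFunLike.ext _ _ (LinearMap.congr_fun hlin)

variable {F B : Type*} [AddCommGroup F] [Module ℂ F] [NonUnitalRing B] [Module ℂ B] [StarRing B]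

/-- `φ` is a homomorphism between the `*`-trings associated with the basic triples `t` and `s`. -/
def IsTernaryHom (t : BasicTriple E A) (s : BasicTriple F B) (φ : E →ₗ[ℂ] F) : Prop :=
  ∀ x y z : E, φ (t.mu x y z) = s.mu (φ x) (φ y) (φ z)

/-- The span of the pairs `(⟪x,y⟫, ⟪φ x, φ y⟫)` in `A × B`, which is to be the graph of the
`*`-homomorphism induced by `φ`. -/
def innerGraph (t : BasicTriple E A) (s : BasicTriple F B) (φ : E →ₗ[ℂ] F) :
    Submodule ℂ (A × B) :=
  Submodule.span ℂ {p | ∃ x y : E, (t.inner x y, s.inner (φ x) (φ y)) = p}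

variable {t : BasicTriple E A} {s : BasicTriple F B} {φ : E →ₗ[ℂ] F}

theorem inner_mem_innerGraph (x y : E) :
    (t.inner x y, s.inner (φ x) (φ y)) ∈ innerGraph t s φ :=
  Submodule.subset_span ⟨x, y, rfl⟩

theorem IsTernaryHom.map_act_of_mem_innerGraph (hφ : IsTernaryHom t s φ) {p : A × B}
    (hp : p ∈ innerGraph t s φ) (x : E) : φ (t.act x p.1) = s.act (φ x) p.2 := by
  induction hp using Submodule.span_induction with
  | mem p h => obtain ⟨y, z, rfl⟩ := h; exact hφ x y z
  | zero => simp only [Prod.fst_zero, Prod.snd_zero, act_zero, map_zero]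
  | add p q _ _ hp hq =>
    simp only [Prod.fst_add, Prod.snd_add, act_add_right, map_add, hp, hq]
  | smul c p _ hp => simp only [Prod.smul_fst, Prod.smul_snd, act_smul_right, map_smul, hp]

theorem star_mem_innerGraph [StarModule ℂ A] [StarModule ℂ B] {p : A × B}
    (hp : p ∈ innerGraph t s φ) : star p ∈ innerGraph t s φ := by
  induction hp using Submodule.span_induction with
  | mem p h =>
    obtain ⟨x, y, rfl⟩ := h
    rw [Prod.star_def, t.star_inner, s.star_inner]
    exact inner_mem_innerGraph y x
  | zero => rw [star_zero]; exact zero_mem _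
  | add p q _ _ hp hq => rw [star_add]; exact add_mem hp hq
  | smul c p _ hp => rw [star_smul]; exact Submodule.smul_mem _ _ hp

theorem IsTernaryHom.mul_mem_innerGraph [IsScalarTower ℂ A A] [IsScalarTower ℂ B B]
    (hφ : IsTernaryHom t s φ) {p q : A × B} (hp : p ∈ innerGraph t s φ)
    (hq : q ∈ innerGraph t s φ) : p * q ∈ innerGraph t s φ := by
  induction hp using Submodule.span_induction with
  | mem p h =>
    obtain ⟨x, y, rfl⟩ := h
    rw [Prod.mul_def, t.inner_mul, s.inner_mul, ← hφ.map_act_of_mem_innerGraph hq]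
    exact inner_mem_innerGraph x (t.act y q.1)
  | zero => rw [zero_mul]; exact zero_mem _
  | add p r _ _ hp hr => rw [add_mul]; exact add_mem hp hr
  | smul c p _ hp => rw [smul_mul_assoc]; exact Submodule.smul_mem _ _ hp

/-- `innerGraph` as a `*`-subalgebra of `A × B`. -/
def IsTernaryHom.innerGraphStarSubalgebra [StarModule ℂ A] [StarModule ℂ B] [IsScalarTower ℂ A A]
    [IsScalarTower ℂ B B] (hφ : IsTernaryHom t s φ) : NonUnitalStarSubalgebra ℂ (A × B) :=
  { innerGraph t s φ with
    mul_mem' := hφ.mul_mem_innerGraph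
    star_mem' := star_mem_innerGraph }

theorem snd_mul_eq_zero_of_mem_innerGraph [IsScalarTower ℂ B B] {p : A × B}
    (hp : p ∈ innerGraph t s φ) {b : B} (hb : ∀ x : E, s.act (φ x) b = 0) : p.2 * b = 0 := by
  induction hp using Submodule.span_induction with
  | mem p h => obtain ⟨x, y, rfl⟩ := h; rw [s.inner_mul, hb, inner_zero_right]
  | zero => exact zero_mul b
  | add p q _ _ hp hq => rw [Prod.snd_add, add_mul, hp, hq, add_zero]
  | smul c p _ hp => rw [Prod.smul_snd, smul_mul_assoc, hp, smul_zero]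

theorem Full.exists_mk_mem_innerGraph (hfull : t.Full) (s : BasicTriple F B) (φ : E →ₗ[ℂ] F)
    (a : A) : ∃ b : B, (a, b) ∈ innerGraph t s φ := by
  have hmap : (innerGraph t s φ).map (LinearMap.fst ℂ A B) = ⊤ := by
    rw [eq_top_iff, ← hfull, Submodule.span_le]
    rintro _ ⟨x, y, rfl⟩
    exact ⟨_, inner_mem_innerGraph x y, rfl⟩
  obtain ⟨⟨_, b⟩, hb, rfl⟩ := Submodule.eq_top_iff'.1 hmap a
  exact ⟨b, hb⟩

section StarAlgebra

variable [StarModule ℂ A] [StarModule ℂ B] [IsScalarTower ℂ B B]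

theorem IsTernaryHom.star_snd_mul_snd_eq_zero (hφ : IsTernaryHom t s φ) {p : A × B}
    (hp : p ∈ innerGraph t s φ) (h : ∀ x : E, φ (t.act x p.1) = 0) : star p.2 * p.2 = 0 :=
  snd_mul_eq_zero_of_mem_innerGraph (star_mem_innerGraph hp) fun x =>
    (hφ.map_act_of_mem_innerGraph hp x).symm.trans (h x)

theorem IsTernaryHom.snd_eq_of_mem_innerGraph (hφ : IsTernaryHom t s φ)
    (hB : ∀ b : B, star b * b = 0 → b = 0) {a : A} {b c : B}
    (hb : (a, b) ∈ innerGraph t s φ) (hc : (a, c) ∈ innerGraph t s φ) : b = c := by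
  have hsub : (0, b - c) ∈ innerGraph t s φ := by simpa using sub_mem hb hc
  refine sub_eq_zero.1 (hB _ (hφ.star_snd_mul_snd_eq_zero hsub fun x => ?_))
  rw [act_zero, map_zero]

theorem IsTernaryHom.exists_starAlgHom_mk_mem_innerGraph [IsScalarTower ℂ A A]
    (hφ : IsTernaryHom t s φ) (hfull : t.Full) (hB : ∀ b : B, star b * b = 0 → b = 0) :
    ∃ ψ : A →⋆ₙₐ[ℂ] B, ∀ a : A, (a, ψ a) ∈ innerGraph t s φ := by
  refine exists_nonUnitalStarAlgHom_of_bijective_fst hφ.innerGraphStarSubalgebra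
    ⟨?_, fun a => ?_⟩
  · rintro ⟨⟨a, b⟩, hb⟩ ⟨⟨_, c⟩, hc⟩ rfl
    exact Subtype.ext (Prod.ext rfl (hφ.snd_eq_of_mem_innerGraph hB hb hc))
  · obtain ⟨b, hb⟩ := hfull.exists_mk_mem_innerGraph s φ a
    exact ⟨⟨(a, b), hb⟩, rfl⟩

end StarAlgebra

end BasicTriple

theorem stmt_1_general {E A F B : Type*} [AddCommGroup E] [Module ℂ E]
    [NonUnitalRing A] [Module ℂ A] [StarRing A] [StarModule ℂ A] [IsScalarTower ℂ A A]
    [AddCommGroup F] [Module ℂ F]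
    [NonUnitalRing B] [Module ℂ B] [StarRing B] [StarModule ℂ B] [IsScalarTower ℂ B B]
    (t : BasicTriple E A) (s : BasicTriple F B) (htfull : t.Full)
    (hB : ∀ b : B, star b * b = 0 → b = 0)
    (φ : E →ₗ[ℂ] F) (hφ : t.IsTernaryHom s φ) :
    ∃ ψ : A →⋆ₙₐ[ℂ] B,
      (∀ x y : E, ψ (t.inner x y) = s.inner (φ x) (φ y)) ∧
      (∀ ψ' : A →⋆ₙₐ[ℂ] B,
        (∀ x y : E, ψ' (t.inner x y) = s.inner (φ x) (φ y)) → ψ' = ψ) ∧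
      (∀ (x : E) (a : A), φ (t.act x a) = s.act (φ x) (ψ a)) ∧
      {a : A | ψ a = 0} = {a : A | ∀ x : E, φ (t.act x a) = 0} ∧
      {a : A | ∀ x : E, φ (t.act x a) = 0} = {a : A | star (ψ a) * ψ a = 0} ∧
      (t.Faithful → Function.Injective φ → Function.Injective ψ) := by
  obtain ⟨ψ, hψ⟩ := hφ.exists_starAlgHom_mk_mem_innerGraph htfull hB
  have hinner (x y : E) : ψ (t.inner x y) = s.inner (φ x) (φ y) :=
    hφ.snd_eq_of_mem_innerGraph hB (hψ _) (BasicTriple.inner_mem_innerGraph x y)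
  have hact (x : E) (a : A) : φ (t.act x a) = s.act (φ x) (ψ a) :=
    hφ.map_act_of_mem_innerGraph (hψ a) x
  have hker {a : A} (ha : ψ a = 0) (x : E) : φ (t.act x a) = 0 := by
    rw [hact, ha, s.act_zero]
  have hstar {a : A} (ha : ∀ x : E, φ (t.act x a) = 0) : star (ψ a) * ψ a = 0 :=
    hφ.star_snd_mul_snd_eq_zero (hψ a) ha
  refine ⟨ψ, hinner, fun ψ' hψ' => htfull.hom_ext fun x y => ?_, hact, ?_, ?_,
    fun hE hinj => (injective_iff_map_eq_zero ψ).2 fun a ha => hE a fun x => ?_⟩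
  · rw [hψ', hinner]
  · exact Set.Subset.antisymm (fun _ => hker) fun a ha => hB _ (hstar ha)
  · exact Set.Subset.antisymm (fun _ => hstar) fun a ha => hker (hB _ ha)
  · exact hinj ((hker ha x).trans (map_zero φ).symm)

/-- Let `(E, A, ⟪·,·⟫_A)` be a full basic triple and
`(F, B, ⟪·,·⟫_B)` a basic triple such that `F` with its associated ternary
product is an admissible `*`-tring and `F` is a faithful `B`-module.  If
`φ : E → F` is a homomorphism between the associated `*`-trings, then there is
a unique `*`-algebra homomorphism `ψ : A → B` with
`ψ⟪x,y⟫_A = ⟪φ x, φ y⟫_B`; moreover `φ(xa) = φ(x)ψ(a)`, and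
`ker ψ ⊆ {a : ∀ x, φ(xa) = 0} ⊆ {a : ψ(a)*ψ(a) = 0}`, with equalities when `B`
is admissible; and if `E` is faithful and `φ` injective, then `ψ` is
injective. -/
theorem stmt_1 {E A F B : Type*} [AddCommGroup E] [Module ℂ E]
    [NonUnitalRing A] [Module ℂ A] [StarRing A] [StarModule ℂ A]
    [IsScalarTower ℂ A A] [SMulCommClass ℂ A A]
    [AddCommGroup F] [Module ℂ F]
    [NonUnitalRing B] [Module ℂ B] [StarRing B] [StarModule ℂ B]
    [IsScalarTower ℂ B B] [SMulCommClass ℂ B B]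
    (t : BasicTriple E A) (s : BasicTriple F B)
    (htfull : t.Full)
    (hFadm : ∀ y : F, s.mu y y y = 0 → y = 0)
    (hFfaith : s.Faithful)
    (φ : E →ₗ[ℂ] F)
    (hφ : ∀ x y z : E, φ (t.mu x y z) = s.mu (φ x) (φ y) (φ z)) :
    ∃ ψ : A →⋆ₙₐ[ℂ] B,
      (∀ x y : E, ψ (t.inner x y) = s.inner (φ x) (φ y)) ∧
      (∀ ψ' : A →⋆ₙₐ[ℂ] B,
        (∀ x y : E, ψ' (t.inner x y) = s.inner (φ x) (φ y)) → ψ' = ψ) ∧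
      (∀ (x : E) (a : A), φ (t.act x a) = s.act (φ x) (ψ a)) ∧
      ({a : A | ψ a = 0} ⊆ {a : A | ∀ x : E, φ (t.act x a) = 0}) ∧
      ({a : A | ∀ x : E, φ (t.act x a) = 0} ⊆ {a : A | star (ψ a) * ψ a = 0}) ∧
      ((∀ b : B, star b * b = 0 → b = 0) →
        {a : A | ψ a = 0} = {a : A | ∀ x : E, φ (t.act x a) = 0} ∧
        {a : A | ∀ x : E, φ (t.act x a) = 0} = {a : A | star (ψ a) * ψ a = 0}) ∧
      (t.Faithful → Function.Injective φ → Function.Injective ψ) := by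
  obtain ⟨ψ, hinner, huniq, hact, hker, hstar, hinj⟩ :=
    stmt_1_general t s htfull (fun _ => hFfaith.eq_zero_of_star_mul_self_eq_zero hFadm) φ hφ
  exact ⟨ψ, hinner, huniq, hact, hker.subset, hstar.subset, fun _ => ⟨hker, hstar⟩, hinj⟩
end
end

section
/- Let E be an admissible *-tring. Then the map T ↦ T* on L_l(E) is a conjugate-linear, antimultiplicative involution satisfying T** = T, making L_l(E) a *-algebra; L_l(E) is admissible as a *-algebra, i.e., T*T = 0 implies T = 0; and span{θ_{y,z} : y,z ∈ E} is a two-sided ideal of L_l(E) which is essential in the sense that if Tθ_{y,z} = 0 for all y,z ∈ E, or θ_{y,z}T = 0 for all y,z ∈ E, then T = 0. -/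
noncomputable section

open scoped ComplexConjugate

/-- `S` is a left adjoint of `T` with respect to the ternary product `μ`:
`μ(x, Ty, z) = μ(Sx, y, z)` for all `x, y, z`.  For an admissible `*`-tring such
an `S` is unique and is denoted `T*`. -/
def IsAdj {E : Type*} [AddCommGroup E] [Module ℂ E] (μ : E → E → E → E)
    (T S : Module.End ℂ E) : Prop :=
  ∀ x y z : E, μ x (T y) z = μ (S x) y z

/-- The endomorphism `θ_{y,z} : x ↦ μ(x,y,z)`. -/
def theta {E : Type*} [AddCommGroup E] [Module ℂ E] {μ : E → E → E → E}
    (h : IsTernaryProduct μ) (y z : E) : Module.End ℂ E where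
  toFun x := μ x y z
  map_add' a b := h.1 a b y z
  map_smul' c a := h.2.1 c a y z

/-!
Nothing in the axioms moves an adjointable `T` past `μ` directly. Both `T** = T` and
`T (μ x y z) = μ x y (T z)` are instead obtained by testing the two sides in the middle variable:
ternary associativity brings `T` to a place where the adjoint relation applies, and admissibility
makes the middle variable of `μ` separating. The second identity reads `T θ_{y,z} = θ_{y,Tz}` and,
with `θ_{y,z} T = θ_{T*y,z}`, gives the ideal property and essentiality.
-/

section Separating

variable {E : Type*} [Zero E] {μ : E → E → E → E}

/-- Nondegeneracy of a ternary product in its first variable, the ternary analogue of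
`LinearMap.SeparatingLeft`. -/
def SeparatingLeft (μ : E → E → E → E) : Prop :=
  ∀ x : E, (∀ y z : E, μ x y z = 0) → x = 0

/-- Nondegeneracy of a ternary product in its middle variable. -/
def SeparatingMiddle (μ : E → E → E → E) : Prop :=
  ∀ y : E, (∀ x z : E, μ x y z = 0) → y = 0

/-- Nondegeneracy of a ternary product in its last variable, the ternary analogue of
`LinearMap.SeparatingRight`. -/
def SeparatingRight (μ : E → E → E → E) : Prop :=
  ∀ z : E, (∀ x y : E, μ x y z = 0) → z = 0

theorem separatingLeft_of_admissible (hadm : ∀ x : E, μ x x x = 0 → x = 0) :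
    SeparatingLeft μ :=
  fun x hx => hadm x (hx x x)

theorem separatingMiddle_of_admissible (hadm : ∀ x : E, μ x x x = 0 → x = 0) :
    SeparatingMiddle μ :=
  fun y hy => hadm y (hy y y)

theorem separatingRight_of_admissible (hadm : ∀ x : E, μ x x x = 0 → x = 0) :
    SeparatingRight μ :=
  fun z hz => hadm z (hz z z)

end Separating

section Adjoint

variable {E : Type*} [AddCommGroup E] [Module ℂ E] {μ : E → E → E → E}

namespace IsTernaryProduct

theorem add_left (h : IsTernaryProduct μ) (x x' y z : E) :
    μ (x + x') y z = μ x y z + μ x' y z :=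
  h.1 x x' y z

theorem smul_left (h : IsTernaryProduct μ) (c : ℂ) (x y z : E) :
    μ (c • x) y z = c • μ x y z :=
  h.2.1 c x y z

theorem add_middle (h : IsTernaryProduct μ) (x y y' z : E) :
    μ x (y + y') z = μ x y z + μ x y' z :=
  h.2.2.1 x y y' z

theorem smul_middle (h : IsTernaryProduct μ) (c : ℂ) (x y z : E) :
    μ x (c • y) z = conj c • μ x y z :=
  h.2.2.2.1 c x y z

theorem assoc_middle (h : IsTernaryProduct μ) (x y z u v : E) :
    μ x (μ u z y) v = μ x y (μ z u v) :=
  h.2.2.2.2.2.2.2 x y z u v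

theorem zero_left (h : IsTernaryProduct μ) (y z : E) : μ 0 y z = 0 :=
  map_zero (theta h y z)

theorem sub_left (h : IsTernaryProduct μ) (x x' y z : E) :
    μ (x - x') y z = μ x y z - μ x' y z :=
  map_sub (theta h y z) x x'

theorem sub_middle (h : IsTernaryProduct μ) (x y y' z : E) :
    μ x (y - y') z = μ x y z - μ x y' z :=
  map_sub (AddMonoidHom.mk' (fun w => μ x w z) fun a b => h.add_middle x a b z) y y'

theorem eq_of_forall_left (h : IsTernaryProduct μ) (hl : SeparatingLeft μ) {x x' : E}
    (hx : ∀ y z : E, μ x y z = μ x' y z) : x = x' :=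
  sub_eq_zero.1 <| hl _ fun y z => by rw [h.sub_left, hx, sub_self]

theorem eq_of_forall_middle (h : IsTernaryProduct μ) (hm : SeparatingMiddle μ) {y y' : E}
    (hy : ∀ x z : E, μ x y z = μ x y' z) : y = y' :=
  sub_eq_zero.1 <| hm _ fun x z => by rw [h.sub_middle, hy, sub_self]

end IsTernaryProduct

namespace IsAdj

variable {T T' S S' : Module.End ℂ E}

theorem unique (h : IsTernaryProduct μ) (hl : SeparatingLeft μ) (hS : IsAdj μ T S)
    (hS' : IsAdj μ T S') : S = S' :=
  LinearMap.ext fun x => h.eq_of_forall_left hl fun y z => (hS x y z).symm.trans (hS' x y z)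

theorem add (h : IsTernaryProduct μ) (hT : IsAdj μ T S) (hT' : IsAdj μ T' S') :
    IsAdj μ (T + T') (S + S') := fun x y z => by
  rw [LinearMap.add_apply, LinearMap.add_apply, h.add_middle, h.add_left, hT, hT']

theorem smul (h : IsTernaryProduct μ) (c : ℂ) (hT : IsAdj μ T S) :
    IsAdj μ (c • T) (conj c • S) := fun x y z => by
  rw [LinearMap.smul_apply, LinearMap.smul_apply, h.smul_middle, h.smul_left, hT]

theorem mul (hT : IsAdj μ T S) (hT' : IsAdj μ T' S') : IsAdj μ (T * T') (S' * S) :=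
  fun x y z => (hT x (T' y) z).trans (hT' (S x) y z)

theorem symm (h : IsTernaryProduct μ) (hm : SeparatingMiddle μ) (hT : IsAdj μ T S) :
    IsAdj μ S T := fun x y z =>
  h.eq_of_forall_middle hm fun u v =>
    calc
      μ u (μ x (S y) z) v = μ u z (μ (S y) x v) := h.assoc_middle u z (S y) x v
      _ = μ u z (μ y (T x) v) := by rw [hT]
      _ = μ u (μ (T x) y z) v := (h.assoc_middle u z y (T x) v).symm

theorem apply_ternary (h : IsTernaryProduct μ) (hm : SeparatingMiddle μ) (hT : IsAdj μ T S)
    (x y z : E) : T (μ x y z) = μ x y (T z) :=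
  h.eq_of_forall_middle hm fun u v =>
    calc
      μ u (T (μ x y z)) v = μ (S u) (μ x y z) v := hT u (μ x y z) v
      _ = μ (S u) z (μ y x v) := h.assoc_middle (S u) z y x v
      _ = μ u (T z) (μ y x v) := (hT u z (μ y x v)).symm
      _ = μ u (μ x y (T z)) v := (h.assoc_middle u (T z) y x v).symm

theorem eq_zero_of_adj_mul_self_eq_zero (h : IsTernaryProduct μ)
    (hadm : ∀ x : E, μ x x x = 0 → x = 0) (hT : IsAdj μ T S) (hST : S * T = 0) : T = 0 :=
  LinearMap.ext fun x => hadm (T x) <|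
    calc
      μ (T x) (T x) (T x) = μ ((S * T) x) x (T x) := hT (T x) x (T x)
      _ = 0 := by rw [hST, LinearMap.zero_apply, h.zero_left]

theorem mul_theta (h : IsTernaryProduct μ) (hm : SeparatingMiddle μ) (hT : IsAdj μ T S)
    (y z : E) : T * theta h y z = theta h y (T z) :=
  LinearMap.ext fun x => hT.apply_ternary h hm x y z

theorem theta_mul (h : IsTernaryProduct μ) (hT : IsAdj μ T S) (y z : E) :
    theta h y z * S = theta h (T y) z :=
  LinearMap.ext fun x => (hT x y z).symm

end IsAdj

/-- The span of the operators `θ_{y,z}`: the analogue, inside the adjointable operators of a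
`*`-tring, of the finite-rank operators on a Hilbert module. -/
def thetaSpan (h : IsTernaryProduct μ) : Submodule ℂ (Module.End ℂ E) :=
  Submodule.span ℂ {u | ∃ y z : E, u = theta h y z}

theorem theta_mem_thetaSpan (h : IsTernaryProduct μ) (y z : E) : theta h y z ∈ thetaSpan h :=
  Submodule.subset_span ⟨y, z, rfl⟩

theorem thetaSpan_le_iff (h : IsTernaryProduct μ) {p : Submodule ℂ (Module.End ℂ E)} :
    thetaSpan h ≤ p ↔ ∀ y z : E, theta h y z ∈ p := by
  refine ⟨fun hp y z => hp (theta_mem_thetaSpan h y z), fun hp => Submodule.span_le.2 ?_⟩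
  rintro _ ⟨y, z, rfl⟩
  exact hp y z

namespace IsAdj

variable {T S U : Module.End ℂ E}

theorem mul_left_mem_thetaSpan (h : IsTernaryProduct μ) (hm : SeparatingMiddle μ)
    (hT : IsAdj μ T S) (hU : U ∈ thetaSpan h) : T * U ∈ thetaSpan h := by
  suffices thetaSpan h ≤ (thetaSpan h).comap (LinearMap.mulLeft ℂ T) from this hU
  refine (thetaSpan_le_iff h).2 fun y z => ?_
  rw [Submodule.mem_comap, LinearMap.mulLeft_apply, hT.mul_theta h hm]
  exact theta_mem_thetaSpan h y (T z)

theorem mul_right_mem_thetaSpan (h : IsTernaryProduct μ) (hT : IsAdj μ T S)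
    (hU : U ∈ thetaSpan h) : U * S ∈ thetaSpan h := by
  suffices thetaSpan h ≤ (thetaSpan h).comap (LinearMap.mulRight ℂ S) from this hU
  refine (thetaSpan_le_iff h).2 fun y z => ?_
  rw [Submodule.mem_comap, LinearMap.mulRight_apply, hT.theta_mul h]
  exact theta_mem_thetaSpan h (T y) z

theorem eq_zero_of_mul_theta_eq_zero (h : IsTernaryProduct μ) (hm : SeparatingMiddle μ)
    (hr : SeparatingRight μ) (hT : IsAdj μ T S) (hTθ : ∀ y z : E, T * theta h y z = 0) :
    T = 0 :=
  LinearMap.ext fun z => hr (T z) fun x y =>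
    calc
      μ x y (T z) = (T * theta h y z) x := (hT.apply_ternary h hm x y z).symm
      _ = 0 := by rw [hTθ, LinearMap.zero_apply]

end IsAdj

theorem eq_zero_of_theta_mul_eq_zero (h : IsTernaryProduct μ) (hl : SeparatingLeft μ)
    {T : Module.End ℂ E} (hθT : ∀ y z : E, theta h y z * T = 0) : T = 0 :=
  LinearMap.ext fun x => hl (T x) fun y z => LinearMap.congr_fun (hθT y z) x

end Adjoint

/-- Let `E` be an admissible `*`-tring.  Then taking adjoints
is a (well-defined) conjugate-linear antimultiplicative involution on the
algebra `L_l(E)` of left-adjointable endomorphisms, `L_l(E)` is admissible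
(`T*T = 0 → T = 0`), and `span{θ_{y,z}}` is a two-sided essential ideal of
`L_l(E)`. -/
theorem stmt_2 {E : Type*} [AddCommGroup E] [Module ℂ E] (μ : E → E → E → E)
    (h : IsTernaryProduct μ) (hadm : ∀ x : E, μ x x x = 0 → x = 0) :
    -- the adjoint is unique
    (∀ T S S' : Module.End ℂ E, IsAdj μ T S → IsAdj μ T S' → S = S') ∧
    -- the adjoint map is conjugate-linear
    (∀ T T' S S' : Module.End ℂ E, IsAdj μ T S → IsAdj μ T' S' →
      IsAdj μ (T + T') (S + S')) ∧
    (∀ (c : ℂ) (T S : Module.End ℂ E), IsAdj μ T S →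
      IsAdj μ (c • T) (conj c • S)) ∧
    -- the adjoint map is antimultiplicative
    (∀ T T' S S' : Module.End ℂ E, IsAdj μ T S → IsAdj μ T' S' →
      IsAdj μ (T * T') (S' * S)) ∧
    -- the adjoint map is an involution: `T** = T`
    (∀ T S : Module.End ℂ E, IsAdj μ T S → IsAdj μ S T) ∧
    -- `L_l(E)` is admissible: `T*T = 0` implies `T = 0`
    (∀ T S : Module.End ℂ E, IsAdj μ T S → S * T = 0 → T = 0) ∧
    -- `span{θ_{y,z}}` is a two-sided ideal of `L_l(E)`
    (∀ T S : Module.End ℂ E, IsAdj μ T S →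
      ∀ U ∈ Submodule.span ℂ {u : Module.End ℂ E | ∃ y z : E, u = theta h y z},
        T * U ∈ Submodule.span ℂ {u : Module.End ℂ E | ∃ y z : E, u = theta h y z} ∧
        U * T ∈ Submodule.span ℂ {u : Module.End ℂ E | ∃ y z : E, u = theta h y z}) ∧
    -- the ideal is essential
    (∀ T S : Module.End ℂ E, IsAdj μ T S →
      ((∀ y z : E, T * theta h y z = 0) → T = 0) ∧
      ((∀ y z : E, theta h y z * T = 0) → T = 0)) := by
  have hl := separatingLeft_of_admissible hadm
  have hm := separatingMiddle_of_admissible hadm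
  have hr := separatingRight_of_admissible hadm
  refine ⟨?unique, ?add, ?smul, ?mul, ?involutive, ?admissible, ?ideal, ?essential⟩
  case unique => exact fun _ _ _ hS hS' => hS.unique h hl hS'
  case add => exact fun _ _ _ _ hT hT' => hT.add h hT'
  case smul => exact fun c _ _ hT => hT.smul h c
  case mul => exact fun _ _ _ _ hT hT' => hT.mul hT'
  case involutive => exact fun _ _ hT => hT.symm h hm
  case admissible => exact fun _ _ hT => hT.eq_zero_of_adj_mul_self_eq_zero h hadm
  case ideal =>
    exact fun _ _ hT _ hU =>
      ⟨hT.mul_left_mem_thetaSpan h hm hU, (hT.symm h hm).mul_right_mem_thetaSpan h hU⟩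
  case essential =>
    exact fun _ _ hT =>
      ⟨hT.eq_zero_of_mul_theta_eq_zero h hm hr, eq_zero_of_theta_mul_eq_zero h hl⟩
end
end

section
/- Let (E, A, ⟨·,·⟩) be a full basic triple such that E is a faithful A-module. If E with the associated ternary product is an admissible *-tring, then A is admissible as a *-algebra, i.e., a*a = 0 implies a = 0. -/
noncomputable section

open scoped ComplexConjugate

variable {E A : Type*} [AddCommGroup E] [Module ℂ E]
    [NonUnitalRing A] [Module ℂ A] [StarRing A]

namespace BasicTriple

variable (t : BasicTriple E A)

theorem mu_act_act (x y z : E) (a b : A) :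
    t.mu (t.act x a) (t.act y b) z = t.act x (a * star b * t.inner y z) := by
  rw [mu, inner_act_left, act_mul, mul_assoc]

variable {t}

theorem act_star_eq_zero_of_star_mul_self_eq_zero
    (hadm : ∀ x : E, t.mu x x x = 0 → x = 0) {a : A} (ha : star a * a = 0) (x : E) :
    t.act x (star a) = 0 := by
  apply hadm
  rw [mu_act_act, star_star, ha, zero_mul, act_zero]

end BasicTriple

theorem stmt_4_general (t : BasicTriple E A) (hfaith : t.Faithful)
    (hadm : ∀ x : E, t.mu x x x = 0 → x = 0) (a : A) (ha : star a * a = 0) : a = 0 :=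
  star_eq_zero.mp <|
    hfaith _ (BasicTriple.act_star_eq_zero_of_star_mul_self_eq_zero hadm ha)

/-- Let `(E, A, ⟪·,·⟫)` be a full basic triple such that `E`
is a faithful `A`-module.  If `E` with the associated ternary product is an
admissible `*`-tring, then `A` is admissible as a `*`-algebra. -/
theorem stmt_4 {E A : Type*} [AddCommGroup E] [Module ℂ E]
    [NonUnitalRing A] [Module ℂ A] [StarRing A] [StarModule ℂ A]
    [IsScalarTower ℂ A A] [SMulCommClass ℂ A A]
    (t : BasicTriple E A) (hfull : t.Full) (hfaith : t.Faithful)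
    (hadm : ∀ x : E, t.mu x x x = 0 → x = 0) :
    ∀ a : A, star a * a = 0 → a = 0 :=
  stmt_4_general t hfaith hadm
end
end

section
/- Let (E, A, ⟨·,·⟩) be a basic triple, consider E as a *-tring with the associated ternary product, and let α be a C*-seminorm on A satisfying the Cauchy–Schwarz condition. Define α̃(x) := α(⟨x,x⟩)^{1/2} for x ∈ E. Then: (1) α̃(xa) ≤ α̃(x)α(a) for all x ∈ E, a ∈ A; (2) α̃ is a C*-seminorm on E; (3) if E is a faithful A-module and α̃ is a norm, then α is a norm; (4) if α is a norm and ⟨x,x⟩ = 0 implies x = 0, then α̃ is a norm. -/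
noncomputable section

open scoped ComplexConjugate

variable {E A : Type*} [AddCommGroup E] [Module ℂ E]
    [NonUnitalRing A] [Module ℂ A] [StarRing A]

/-- A `C*`-seminorm on a `*`-tring `(E, μ)`. -/
def IsCStarSeminormTring {E : Type*} [AddCommGroup E] [Module ℂ E]
    (μ : E → E → E → E) (γ : E → ℝ) : Prop :=
  (∀ x y : E, γ (x + y) ≤ γ x + γ y) ∧
  (∀ (c : ℂ) (x : E), γ (c • x) = ‖c‖ * γ x) ∧
  (∀ x y z : E, γ (μ x y z) ≤ γ x * γ y * γ z) ∧
  (∀ x : E, γ (μ x x x) = (γ x) ^ 3)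

/-- A `C*`-seminorm on a complex `*`-algebra `A`. -/
def IsCStarSeminormAlg {A : Type*} [NonUnitalRing A] [Module ℂ A] [StarRing A]
    (α : A → ℝ) : Prop :=
  (∀ a b : A, α (a + b) ≤ α a + α b) ∧
  (∀ (c : ℂ) (a : A), α (c • a) = ‖c‖ * α a) ∧
  (∀ a b : A, α (a * b) ≤ α a * α b) ∧
  (∀ a : A, α (star a * a) = (α a) ^ 2)

/-!
A C*-seminorm `α` is star-invariant, so `⟪xa, xa⟫ = a* ⟪x, x⟫ a` gives `α̃(xa) ≤ α̃(x) α(a)`.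
Written as `α⟪x, y⟫ ≤ α̃(x) α̃(y)`, the Cauchy–Schwarz condition then gives the triangle inequality,
as for Hilbert spaces, and submultiplicativity of the ternary product. For the C*-identity put
`h = ⟪x, x⟫`, which is self-adjoint: `α̃(xh)² = α(h h* h)`, and `α(h h* h) = α(h)³` because
`α(h)⁴ = α((h* h)* (h* h)) ≤ α(h) α(h h* h)`.
-/

namespace IsCStarSeminormAlg

variable {α : A → ℝ}

/-- A `C*`-seminorm as a bundled seminorm, giving access to the general theory of seminorms. -/
def toSeminorm (hα : IsCStarSeminormAlg α) : Seminorm ℂ A :=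
  Seminorm.of α hα.1 hα.2.1

theorem nonneg (hα : IsCStarSeminormAlg α) (a : A) : 0 ≤ α a :=
  apply_nonneg hα.toSeminorm a

theorem map_mul_le (hα : IsCStarSeminormAlg α) (a b : A) : α (a * b) ≤ α a * α b :=
  hα.2.2.1 a b

theorem map_star_mul_self (hα : IsCStarSeminormAlg α) (a : A) : α (star a * a) = α a ^ 2 :=
  hα.2.2.2 a

theorem le_map_star (hα : IsCStarSeminormAlg α) (a : A) : α a ≤ α (star a) := by
  rcases (hα.nonneg a).eq_or_lt with h_zero | h_pos
  · exact h_zero ▸ hα.nonneg (star a)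
  · refine le_of_mul_le_mul_right ?_ h_pos
    rw [← sq, ← hα.map_star_mul_self]
    exact hα.map_mul_le (star a) a

theorem map_star (hα : IsCStarSeminormAlg α) (a : A) : α (star a) = α a :=
  le_antisymm (by simpa only [star_star] using hα.le_map_star (star a)) (hα.le_map_star a)

theorem map_star_mul_mul_le (hα : IsCStarSeminormAlg α) (a b : A) :
    α (star a * b * a) ≤ α b * α a ^ 2 :=
  calc α (star a * b * a)
    _ ≤ α (star a * b) * α a := hα.map_mul_le _ _
    _ ≤ α (star a) * α b * α a := by gcongr; exacts [hα.nonneg a, hα.map_mul_le _ _]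
    _ = α b * α a ^ 2 := by rw [hα.map_star]; ring

theorem map_mul_star_mul_self (hα : IsCStarSeminormAlg α) (a : A) :
    α (a * star a * a) = α a ^ 3 := by
  apply le_antisymm
  · calc α (a * star a * a)
      _ = α (star (star a) * star a * a) := by rw [star_star]
      _ ≤ α (star (star a) * star a) * α a := hα.map_mul_le _ _
      _ = α a ^ 3 := by rw [hα.map_star_mul_self, hα.map_star]; ring
  · rcases (hα.nonneg a).eq_or_lt with h_zero | h_pos
    · rw [← h_zero, zero_pow three_ne_zero]
      exact hα.nonneg _
    · refine le_of_mul_le_mul_left ?_ h_pos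
      calc α a * α a ^ 3
        _ = α (star a * a) ^ 2 := by rw [hα.map_star_mul_self]; ring
        _ = α (star a * (a * star a * a)) := by
          rw [← hα.map_star_mul_self, star_mul, star_star]; simp only [mul_assoc]
        _ ≤ α (star a) * α (a * star a * a) := hα.map_mul_le _ _
        _ = α a * α (a * star a * a) := by rw [hα.map_star]

end IsCStarSeminormAlg

namespace BasicTriple

variable {t : BasicTriple E A} {α : A → ℝ}

theorem inner_act_act (t : BasicTriple E A) (x y : E) (a b : A) :
    t.inner (t.act x a) (t.act y b) = star a * t.inner x y * b := by
  rw [← t.inner_mul, ← t.star_inner y (t.act x a), ← t.inner_mul, star_mul, t.star_inner]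

/-- The function `α̃(x) = α(⟪x, x⟫)^{1/2}` on `E` induced by a function `α` on `A`. It is meant for
nonnegative `α`, since `√` vanishes at negative arguments. -/
def inducedNorm (t : BasicTriple E A) (α : A → ℝ) (x : E) : ℝ :=
  √(α (t.inner x x))

/-- The Cauchy–Schwarz condition on a function `α` on `A`, relative to the pairing of `t`. -/
def CauchySchwarz (t : BasicTriple E A) (α : A → ℝ) : Prop :=
  ∀ x y : E, α (t.inner x y) ^ 2 ≤ α (t.inner x x) * α (t.inner y y)

theorem inducedNorm_nonneg (t : BasicTriple E A) (α : A → ℝ) (x : E) : 0 ≤ t.inducedNorm α x :=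
  Real.sqrt_nonneg _

theorem inducedNorm_sq (t : BasicTriple E A) (h_nonneg : ∀ a, 0 ≤ α a) (x : E) :
    t.inducedNorm α x ^ 2 = α (t.inner x x) :=
  Real.sq_sqrt (h_nonneg _)

theorem CauchySchwarz.inner_le (hcs : t.CauchySchwarz α) (h_nonneg : ∀ a, 0 ≤ α a) (x y : E) :
    α (t.inner x y) ≤ t.inducedNorm α x * t.inducedNorm α y := by
  refine le_of_sq_le_sq ?_ (mul_nonneg (t.inducedNorm_nonneg α x) (t.inducedNorm_nonneg α y))
  rw [mul_pow, t.inducedNorm_sq h_nonneg, t.inducedNorm_sq h_nonneg]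
  exact hcs x y

theorem inducedNorm_smul (t : BasicTriple E A) (p : Seminorm ℂ A) (c : ℂ) (x : E) :
    t.inducedNorm p (c • x) = ‖c‖ * t.inducedNorm p x := by
  rw [← sq_eq_sq₀ (t.inducedNorm_nonneg p _)
    (mul_nonneg (norm_nonneg c) (t.inducedNorm_nonneg p x)), mul_pow,
    t.inducedNorm_sq (apply_nonneg p), t.inducedNorm_sq (apply_nonneg p), t.inner_smul_left,
    t.inner_smul_right, map_smul_eq_mul, map_smul_eq_mul, Complex.norm_conj]
  ring

theorem CauchySchwarz.inducedNorm_add_le {p : Seminorm ℂ A} (hcs : t.CauchySchwarz p) (x y : E) :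
    t.inducedNorm p (x + y) ≤ t.inducedNorm p x + t.inducedNorm p y := by
  refine le_of_sq_le_sq ?_ (add_nonneg (t.inducedNorm_nonneg p x) (t.inducedNorm_nonneg p y))
  calc t.inducedNorm p (x + y) ^ 2
    _ = p ((t.inner x x + t.inner x y) + (t.inner y x + t.inner y y)) := by
      rw [t.inducedNorm_sq (apply_nonneg p), t.inner_add_left, t.inner_add_right, t.inner_add_right]
    _ ≤ (p (t.inner x x) + p (t.inner x y)) + (p (t.inner y x) + p (t.inner y y)) :=
      (map_add_le_add p _ _).trans (add_le_add (map_add_le_add p _ _) (map_add_le_add p _ _))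
    _ ≤ (t.inducedNorm p x ^ 2 + t.inducedNorm p x * t.inducedNorm p y) +
        (t.inducedNorm p y * t.inducedNorm p x + t.inducedNorm p y ^ 2) := by
      rw [t.inducedNorm_sq (apply_nonneg p), t.inducedNorm_sq (apply_nonneg p)]
      gcongr <;> exact hcs.inner_le (apply_nonneg p) _ _
    _ = (t.inducedNorm p x + t.inducedNorm p y) ^ 2 := by ring

theorem inducedNorm_act_le (t : BasicTriple E A) (hα : IsCStarSeminormAlg α) (x : E) (a : A) :
    t.inducedNorm α (t.act x a) ≤ t.inducedNorm α x * α a := by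
  refine le_of_sq_le_sq ?_ (mul_nonneg (t.inducedNorm_nonneg α x) (hα.nonneg a))
  calc t.inducedNorm α (t.act x a) ^ 2
    _ = α (star a * t.inner x x * a) := by
      rw [t.inducedNorm_sq hα.nonneg, t.inner_act_act]
    _ ≤ α (t.inner x x) * α a ^ 2 := hα.map_star_mul_mul_le a _
    _ = (t.inducedNorm α x * α a) ^ 2 := by
      rw [mul_pow, t.inducedNorm_sq hα.nonneg]

theorem CauchySchwarz.inducedNorm_mu_le (hcs : t.CauchySchwarz α) (hα : IsCStarSeminormAlg α)
    (x y z : E) :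
    t.inducedNorm α (t.mu x y z) ≤ t.inducedNorm α x * t.inducedNorm α y * t.inducedNorm α z :=
  calc t.inducedNorm α (t.act x (t.inner y z))
    _ ≤ t.inducedNorm α x * α (t.inner y z) := t.inducedNorm_act_le hα x _
    _ ≤ t.inducedNorm α x * (t.inducedNorm α y * t.inducedNorm α z) :=
      mul_le_mul_of_nonneg_left (hcs.inner_le hα.nonneg y z) (t.inducedNorm_nonneg α x)
    _ = t.inducedNorm α x * t.inducedNorm α y * t.inducedNorm α z := (mul_assoc _ _ _).symm

theorem inducedNorm_mu_self (t : BasicTriple E A) (hα : IsCStarSeminormAlg α) (x : E) :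
    t.inducedNorm α (t.mu x x x) = t.inducedNorm α x ^ 3 := by
  rw [← sq_eq_sq₀ (t.inducedNorm_nonneg α _) (pow_nonneg (t.inducedNorm_nonneg α x) 3)]
  calc t.inducedNorm α (t.mu x x x) ^ 2
    _ = α (t.inner x x * star (t.inner x x) * t.inner x x) := by
      rw [t.inducedNorm_sq hα.nonneg, mu, t.inner_act_act, t.star_inner]
    _ = (t.inducedNorm α x ^ 2) ^ 3 := by rw [hα.map_mul_star_mul_self, t.inducedNorm_sq hα.nonneg]
    _ = (t.inducedNorm α x ^ 3) ^ 2 := by ring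

theorem CauchySchwarz.isCStarSeminormTring_inducedNorm (hcs : t.CauchySchwarz α)
    (hα : IsCStarSeminormAlg α) : IsCStarSeminormTring t.mu (t.inducedNorm α) :=
  ⟨inducedNorm_add_le (p := hα.toSeminorm) hcs, t.inducedNorm_smul hα.toSeminorm,
    hcs.inducedNorm_mu_le hα, t.inducedNorm_mu_self hα⟩

theorem Faithful.eq_zero_of_map_eq_zero (ht : t.Faithful) (hα : IsCStarSeminormAlg α)
    (h_norm : ∀ x : E, t.inducedNorm α x = 0 → x = 0) {a : A} (ha : α a = 0) : a = 0 := by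
  refine ht a fun x => h_norm _ (le_antisymm ?_ (t.inducedNorm_nonneg α _))
  simpa only [ha, mul_zero] using t.inducedNorm_act_le hα x a

theorem eq_zero_of_inducedNorm_eq_zero (h_nonneg : ∀ a, 0 ≤ α a)
    (h_norm : ∀ a, α a = 0 → a = 0) (h_def : ∀ x : E, t.inner x x = 0 → x = 0) {x : E}
    (hx : t.inducedNorm α x = 0) : x = 0 :=
  h_def x (h_norm _ ((Real.sqrt_eq_zero (h_nonneg _)).1 hx))

end BasicTriple

/-- Let `(E, A, ⟪·,·⟫)` be a basic triple, `E` viewed as a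
`*`-tring with the associated ternary product, and `α` a `C*`-seminorm on `A`
satisfying the Cauchy–Schwarz condition.  Setting `α̃(x) := α(⟪x,x⟫)^{1/2}`:
(1) `α̃(xa) ≤ α̃(x)α(a)`; (2) `α̃` is a `C*`-seminorm on `E`; (3) if `E` is a
faithful `A`-module and `α̃` is a norm then `α` is a norm; (4) if `α` is a norm
and `⟪x,x⟫ = 0` implies `x = 0`, then `α̃` is a norm. -/
theorem stmt_7 {E A : Type*} [AddCommGroup E] [Module ℂ E]
    [NonUnitalRing A] [Module ℂ A] [StarRing A] [StarModule ℂ A]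
    [IsScalarTower ℂ A A] [SMulCommClass ℂ A A]
    (t : BasicTriple E A)
    (α : A → ℝ) (hα : IsCStarSeminormAlg α)
    (hcs : ∀ x y : E, (α (t.inner x y)) ^ 2 ≤ α (t.inner x x) * α (t.inner y y)) :
    (∀ (x : E) (a : A),
        Real.sqrt (α (t.inner (t.act x a) (t.act x a))) ≤
          Real.sqrt (α (t.inner x x)) * α a) ∧
    IsCStarSeminormTring t.mu (fun x => Real.sqrt (α (t.inner x x))) ∧
    (t.Faithful → (∀ x : E, Real.sqrt (α (t.inner x x)) = 0 → x = 0) →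
      ∀ a : A, α a = 0 → a = 0) ∧
    ((∀ a : A, α a = 0 → a = 0) → (∀ x : E, t.inner x x = 0 → x = 0) →
      ∀ x : E, Real.sqrt (α (t.inner x x)) = 0 → x = 0) :=
  have ht : t.CauchySchwarz α := hcs
  ⟨t.inducedNorm_act_le hα,
    ht.isCStarSeminormTring_inducedNorm hα,
    fun h_faithful h_norm _ => h_faithful.eq_zero_of_map_eq_zero hα h_norm,
    fun h_norm h_def _ => BasicTriple.eq_zero_of_inducedNorm_eq_zero hα.nonneg h_norm h_def⟩
end
end

section
/- Let (E, A, ⟨·,·⟩) be a full basic triple and let α be a C*-seminorm on A satisfying the Cauchy–Schwarz condition. Then {a ∈ A : α(⟨xa, xa⟩) = 0 for all x ∈ E} = {a ∈ A : α(a) = 0}. -/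
noncomputable section

open scoped ComplexConjugate

variable {E A : Type*} [AddCommGroup E] [Module ℂ E]
    [NonUnitalRing A] [Module ℂ A] [StarRing A]

/-! An element `a` lies in the kernel of `α` exactly when `α` vanishes on the left ideal `A * a`:
one direction is submultiplicativity, the other is the `C*`-identity. By fullness it suffices to
test the products `⟪x, y⟫ * a = ⟪x, y a⟫`; by the Cauchy–Schwarz condition these are null as soon
as every `⟪y a, y a⟫` is, and `x := y a` gives the converse. -/

theorem seminorm_eq_zero_of_mem_span {𝕜 V : Type*} [SeminormedRing 𝕜] [AddCommGroup V]
    [Module 𝕜 V] (p : Seminorm 𝕜 V) {s : Set V} (hs : ∀ v ∈ s, p v = 0) {v : V}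
    (hv : v ∈ Submodule.span 𝕜 s) : p v = 0 := by
  induction hv using Submodule.span_induction with
  | mem v hv => exact hs v hv
  | zero => exact map_zero p
  | add u v _ _ hu hv =>
    exact le_antisymm ((map_add_le_add p u v).trans_eq (by rw [hu, hv, add_zero]))
      (apply_nonneg p _)
  | smul c v _ hv => rw [map_smul_eq_mul, hv, mul_zero]

namespace IsCStarSeminormAlg

variable {α : A → ℝ}

theorem forall_map_mul_eq_zero_iff (hα : IsCStarSeminormAlg α) {a : A} :
    (∀ b, α (b * a) = 0) ↔ α a = 0 := by
  constructor
  · intro h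
    exact pow_eq_zero_iff two_ne_zero |>.1 ((hα.map_star_mul_self a).symm.trans (h (star a)))
  · intro ha b
    exact le_antisymm ((hα.map_mul_le b a).trans_eq (by rw [ha, mul_zero]))
      (apply_nonneg hα.toSeminorm (b * a))

end IsCStarSeminormAlg

namespace BasicTriple

theorem Full.forall_map_mul_eq_zero_iff [IsScalarTower ℂ A A] {t : BasicTriple E A}
    (hfull : t.Full) (p : Seminorm ℂ A) {a : A} :
    (∀ b, p (b * a) = 0) ↔ ∀ x y, p (t.inner x y * a) = 0 := by
  refine ⟨fun h x y => h (t.inner x y), fun h b => ?_⟩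
  have hb : b ∈ Submodule.span ℂ {c : A | ∃ x y : E, t.inner x y = c} :=
    hfull.symm ▸ Submodule.mem_top
  refine seminorm_eq_zero_of_mem_span (p.comp (LinearMap.mulRight ℂ a)) ?_ hb
  rintro _ ⟨x, y, rfl⟩
  exact h x y

theorem map_inner_eq_zero_of_map_inner_self_eq_zero (t : BasicTriple E A) {α : A → ℝ} {x y : E}
    (hcs : α (t.inner x y) ^ 2 ≤ α (t.inner x x) * α (t.inner y y))
    (hy : α (t.inner y y) = 0) : α (t.inner x y) = 0 := by
  rw [hy, mul_zero] at hcs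
  exact sq_nonpos_iff _ |>.1 hcs

theorem forall_map_inner_mul_eq_zero_iff (t : BasicTriple E A) {α : A → ℝ}
    (hcs : ∀ x y : E, α (t.inner x y) ^ 2 ≤ α (t.inner x x) * α (t.inner y y)) {a : A} :
    (∀ x y, α (t.inner x y * a) = 0) ↔ ∀ x, α (t.inner (t.act x a) (t.act x a)) = 0 := by
  simp only [t.inner_mul]
  exact ⟨fun h x => h (t.act x a) x, fun h x y =>
    t.map_inner_eq_zero_of_map_inner_self_eq_zero (hcs x (t.act y a)) (h y)⟩

end BasicTriple

/-- Let `(E, A, ⟪·,·⟫)` be a full basic triple and `α` a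
`C*`-seminorm on `A` satisfying the Cauchy–Schwarz condition.  Then
`{a : α(⟪xa,xa⟫) = 0 for all x} = {a : α(a) = 0}`. -/
theorem stmt_8 {E A : Type*} [AddCommGroup E] [Module ℂ E]
    [NonUnitalRing A] [Module ℂ A] [StarRing A] [StarModule ℂ A]
    [IsScalarTower ℂ A A] [SMulCommClass ℂ A A]
    (t : BasicTriple E A) (hfull : t.Full)
    (α : A → ℝ) (hα : IsCStarSeminormAlg α)
    (hcs : ∀ x y : E, (α (t.inner x y)) ^ 2 ≤ α (t.inner x x) * α (t.inner y y)) :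
    {a : A | ∀ x : E, α (t.inner (t.act x a) (t.act x a)) = 0} =
      {a : A | α a = 0} := by
  ext a
  calc (∀ x, α (t.inner (t.act x a) (t.act x a)) = 0)
    _ ↔ ∀ x y, α (t.inner x y * a) = 0 := (t.forall_map_inner_mul_eq_zero_iff hcs).symm
    _ ↔ ∀ b, α (b * a) = 0 := (hfull.forall_map_mul_eq_zero_iff hα.toSeminorm).symm
    _ ↔ α a = 0 := hα.forall_map_mul_eq_zero_iff
end
end

section
/- Let A be a complex *-algebra, I a *-ideal of A, and α a C*-seminorm on I. For a ∈ A define α'(a) := sup{α(ax) : x ∈ I, α(x) ≤ 1} ∈ [0,∞], and let L_a : I → I be the map x ↦ ax. Then the following are equivalent: (1) α'(a) < ∞ for all a ∈ A; (2) for every a ∈ A there is a constant C with α(ax) ≤ Cα(x) for all x ∈ I; (3) α extends to a C*-seminorm on A. If these conditions hold, then: (a) α' is a C*-seminorm on A extending α, and α' ≤ β for every C*-seminorm β on A extending α; (b) if α is a norm on I, then α' is a norm on A if and only if Ann_A(I) := {a ∈ A : ax = 0 for all x ∈ I} = 0. -/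
noncomputable section

open scoped ComplexConjugate

/-!
`α'` is the operator seminorm of left multiplication on `I`. As such it is automatically a
submultiplicative seminorm, and rescaling the unit ball gives `α (a * x) ≤ α' a * α x` on all of
`I`. The `C*`-identity for `α` on `I` turns `α (a * x) ^ 2 = α (star x * (star a * a * x))` into
`α' a ^ 2 ≤ α' (star a * a)`, which already forces the `C*`-identity for `α'`. Testing `α'` at
`star y` for `y ∈ I` shows that `α'` extends `α`, and any submultiplicative extension `β` satisfies
`α (a * x) ≤ β a * α x`, so it dominates `α'`.
-/

theorem le_of_sq_le_mul_self {R : Type*} [Ring R] [LinearOrder R] [IsStrictOrderedRing R]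
    {r s : R} (hs : 0 ≤ s) (h : r ^ 2 ≤ s * r) : r ≤ s := by
  by_contra! hlt
  rw [sq] at h
  exact hlt.not_ge (le_of_mul_le_mul_right h (hs.trans_lt hlt))

/-- `α` restricts to a seminorm on the submodule `I`; its values outside `I` are irrelevant, so
that, as in the notion of extension of a seminorm, one function can be compared on several
submodules. -/
structure IsSeminormOn {𝕜 E : Type*} [NormedField 𝕜] [AddCommGroup E] [Module 𝕜 E]
    (I : Submodule 𝕜 E) (α : E → ℝ) : Prop where
  add_le : ∀ x ∈ I, ∀ y ∈ I, α (x + y) ≤ α x + α y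
  smul : ∀ (c : 𝕜), ∀ x ∈ I, α (c • x) = ‖c‖ * α x

/-- `α` restricts to a `C*`-seminorm on the submodule `I`, which is meant to be a `*`-subalgebra.
For `I = ⊤` and `𝕜 = ℂ` this is `IsCStarSeminormAlg`. -/
structure IsCStarSeminormOn {𝕜 A : Type*} [NormedField 𝕜] [NonUnitalRing A] [Module 𝕜 A]
    [StarRing A] (I : Submodule 𝕜 A) (α : A → ℝ) : Prop extends IsSeminormOn I α where
  mul_le : ∀ x ∈ I, ∀ y ∈ I, α (x * y) ≤ α x * α y
  star_mul_self : ∀ x ∈ I, α (star x * x) = α x ^ 2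

theorem isCStarSeminormOn_top_iff {A : Type*} [NonUnitalRing A] [Module ℂ A] [StarRing A]
    {α : A → ℝ} : IsCStarSeminormOn (⊤ : Submodule ℂ A) α ↔ IsCStarSeminormAlg α :=
  ⟨fun h => ⟨fun a b => h.add_le a trivial b trivial, fun c a => h.smul c a trivial,
      fun a b => h.mul_le a trivial b trivial, fun a => h.star_mul_self a trivial⟩,
    fun ⟨hadd, hsmul, hmul, hstar⟩ => ⟨⟨fun a _ b _ => hadd a b, fun c a _ => hsmul c a⟩,
      fun a _ b _ => hmul a b, fun a _ => hstar a⟩⟩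

namespace IsSeminormOn

variable {𝕜 E : Type*} [NormedField 𝕜] [AddCommGroup E] [Module 𝕜 E] {I : Submodule 𝕜 E}
  {α : E → ℝ} {x : E}

theorem map_zero (hα : IsSeminormOn I α) : α 0 = 0 := by
  simpa using hα.smul 0 0 I.zero_mem

theorem map_neg (hα : IsSeminormOn I α) (hx : x ∈ I) : α (-x) = α x := by
  simpa using hα.smul (-1) x hx

theorem nonneg (hα : IsSeminormOn I α) (hx : x ∈ I) : 0 ≤ α x := by
  have h : α (x + -x) ≤ α x + α (-x) := hα.add_le x hx (-x) (I.neg_mem hx)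
  rw [add_neg_cancel, hα.map_zero, hα.map_neg hx] at h
  linarith

end IsSeminormOn

section Star

variable {𝕜 A : Type*} [NormedField 𝕜] [NonUnitalRing A] [Module 𝕜 A] [StarRing A]
  {I : Submodule 𝕜 A} {α : A → ℝ} {x : A}

theorem IsSeminormOn.map_star_of_sq_le (hα : IsSeminormOn I α) (hstar : ∀ x ∈ I, star x ∈ I)
    (hmul_le : ∀ x ∈ I, ∀ y ∈ I, α (x * y) ≤ α x * α y)
    (hsq_le : ∀ x ∈ I, α x ^ 2 ≤ α (star x * x)) (hx : x ∈ I) : α (star x) = α x := by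
  have le_star : ∀ y ∈ I, α y ≤ α (star y) := fun y hy =>
    le_of_sq_le_mul_self (hα.nonneg (hstar y hy))
      ((hsq_le y hy).trans (hmul_le _ (hstar y hy) y hy))
  refine le_antisymm ?_ (le_star x hx)
  simpa only [star_star] using le_star _ (hstar x hx)

theorem IsCStarSeminormOn.map_star (hα : IsCStarSeminormOn I α) (hstar : ∀ x ∈ I, star x ∈ I)
    (hx : x ∈ I) : α (star x) = α x :=
  hα.map_star_of_sq_le hstar hα.mul_le (fun y hy => (hα.star_mul_self y hy).ge) hx

theorem IsCStarSeminormOn.of_sq_le (hα : IsSeminormOn I α) (hstar : ∀ x ∈ I, star x ∈ I)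
    (hmul_le : ∀ x ∈ I, ∀ y ∈ I, α (x * y) ≤ α x * α y)
    (hsq_le : ∀ x ∈ I, α x ^ 2 ≤ α (star x * x)) : IsCStarSeminormOn I α where
  toIsSeminormOn := hα
  mul_le := hmul_le
  star_mul_self x hx := by
    refine le_antisymm ?_ (hsq_le x hx)
    calc α (star x * x) ≤ α (star x) * α x := hmul_le _ (hstar x hx) x hx
      _ = α x ^ 2 := by rw [hα.map_star_of_sq_le hstar hmul_le hsq_le hx, sq]

end Star

/-- The values of `α` on the image of the unit ball of `I` under left multiplication by `a`. -/
def leftMulValues {𝕜 A : Type*} [NormedField 𝕜] [NonUnitalRing A] [Module 𝕜 A]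
    (I : Submodule 𝕜 A) (α : A → ℝ) (a : A) : Set ℝ :=
  {s : ℝ | ∃ x ∈ I, α x ≤ 1 ∧ s = α (a * x)}

/-- The seminorm `α'` of the theorem: the operator seminorm of left multiplication by `a` on
`(I, α)`. It has the junk value `0` when `leftMulValues I α a` is unbounded. -/
def leftMulSeminorm {𝕜 A : Type*} [NormedField 𝕜] [NonUnitalRing A] [Module 𝕜 A]
    (I : Submodule 𝕜 A) (α : A → ℝ) (a : A) : ℝ :=
  sSup (leftMulValues I α a)

section LeftMulSeminorm

variable {𝕜 A : Type*} [NonUnitalRing A]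

section NormedField

variable [NormedField 𝕜] [Module 𝕜 A] {I : Submodule 𝕜 A} {α β : A → ℝ} {a : A}

theorem leftMulSeminorm_nonneg (hα : IsSeminormOn I α) (hmul : ∀ (a : A), ∀ x ∈ I, a * x ∈ I) :
    0 ≤ leftMulSeminorm I α a := by
  refine Real.sSup_nonneg ?_
  rintro _ ⟨x, hx, -, rfl⟩
  exact hα.nonneg (hmul a x hx)

theorem mem_upperBounds_leftMulValues {C : ℝ} (hC : 0 ≤ C)
    (h : ∀ x ∈ I, α (a * x) ≤ C * α x) : C ∈ upperBounds (leftMulValues I α a) := by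
  rintro _ ⟨x, hx, hx_le, rfl⟩
  exact (h x hx).trans (mul_le_of_le_one_right hC hx_le)

theorem leftMulSeminorm_le {C : ℝ} (hC : 0 ≤ C) (h : ∀ x ∈ I, α (a * x) ≤ C * α x) :
    leftMulSeminorm I α a ≤ C :=
  Real.sSup_le (mem_upperBounds_leftMulValues hC h) hC

theorem bddAbove_leftMulValues (hα : IsSeminormOn I α) {C : ℝ}
    (h : ∀ x ∈ I, α (a * x) ≤ C * α x) : BddAbove (leftMulValues I α a) :=
  ⟨|C|, mem_upperBounds_leftMulValues (abs_nonneg C) fun x hx =>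
    (h x hx).trans (mul_le_mul_of_nonneg_right (le_abs_self C) (hα.nonneg hx))⟩

theorem apply_mul_le_of_extends (hmul : ∀ (a : A), ∀ x ∈ I, a * x ∈ I)
    (hβ : ∀ a b : A, β (a * b) ≤ β a * β b) (hext : ∀ x ∈ I, β x = α x) (a : A) :
    ∀ x ∈ I, α (a * x) ≤ β a * α x := by
  intro x hx
  simpa only [hext x hx, hext _ (hmul a x hx)] using hβ a x

open scoped Pointwise in
theorem leftMulSeminorm_smul [IsScalarTower 𝕜 A A] (hα : IsSeminormOn I α)
    (hmul : ∀ (a : A), ∀ x ∈ I, a * x ∈ I) (c : 𝕜) (a : A) :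
    leftMulSeminorm I α (c • a) = ‖c‖ * leftMulSeminorm I α a := by
  have h_values : leftMulValues I α (c • a) = ‖c‖ • leftMulValues I α a := by
    have h_mul (x : A) (hx : x ∈ I) : α (c • a * x) = ‖c‖ * α (a * x) := by
      rw [smul_mul_assoc, hα.smul c _ (hmul a x hx)]
    ext s
    constructor
    · rintro ⟨x, hx, hx_le, rfl⟩
      exact ⟨α (a * x), ⟨x, hx, hx_le, rfl⟩, (h_mul x hx).symm⟩
    · rintro ⟨_, ⟨x, hx, hx_le, rfl⟩, rfl⟩
      exact ⟨x, hx, hx_le, (h_mul x hx).symm⟩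
  rw [leftMulSeminorm, h_values, Real.sSup_smul_of_nonneg (norm_nonneg c), smul_eq_mul,
    leftMulSeminorm]

end NormedField

variable [DenselyNormedField 𝕜] [Module 𝕜 A] [SMulCommClass 𝕜 A A]
  {I : Submodule 𝕜 A} {α : A → ℝ} {a b x : A}

theorem apply_mul_le_leftMulSeminorm_mul (hα : IsSeminormOn I α)
    (hmul : ∀ (a : A), ∀ x ∈ I, a * x ∈ I) (hb : BddAbove (leftMulValues I α a)) (hx : x ∈ I) :
    α (a * x) ≤ leftMulSeminorm I α a * α x := by
  have scaled_le (c : 𝕜) (hc : ‖c‖ * α x ≤ 1) : ‖c‖ * α (a * x) ≤ leftMulSeminorm I α a := by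
    refine le_csSup hb ⟨c • x, I.smul_mem c hx, ?_, ?_⟩
    · rwa [hα.smul c x hx]
    · rw [mul_smul_comm, hα.smul c _ (hmul a x hx)]
  -- Enlarging both factors covers `α x = 0` and avoids the need for a scalar of norm `(α x)⁻¹`.
  refine le_mul_of_forall_lt₀ fun S hS r hr => ?_
  have hS_pos : 0 < S := (leftMulSeminorm_nonneg hα hmul).trans_lt hS
  have hr_pos : 0 < r := (hα.nonneg hx).trans_lt hr
  by_contra! hlt
  have h_pos : 0 < α (a * x) := (mul_pos hS_pos hr_pos).trans hlt
  have h_div : S / α (a * x) < 1 / r := by rwa [div_lt_div_iff₀ h_pos hr_pos, one_mul]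
  obtain ⟨c, hSc, hcr⟩ := NormedField.exists_lt_norm_lt 𝕜 (by positivity) h_div
  have hc : ‖c‖ * α x ≤ 1 :=
    (mul_le_mul_of_nonneg_left hr.le (norm_nonneg c)).trans ((lt_div_iff₀ hr_pos).1 hcr).le
  exact (((div_lt_iff₀ h_pos).1 hSc).trans_le (scaled_le c hc)).not_gt hS

theorem bddAbove_leftMulValues_iff (hα : IsSeminormOn I α)
    (hmul : ∀ (a : A), ∀ x ∈ I, a * x ∈ I) :
    BddAbove (leftMulValues I α a) ↔ ∃ C : ℝ, ∀ x ∈ I, α (a * x) ≤ C * α x :=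
  ⟨fun hb => ⟨_, fun _ hx => apply_mul_le_leftMulSeminorm_mul hα hmul hb hx⟩,
    fun ⟨_, hC⟩ => bddAbove_leftMulValues hα hC⟩

theorem leftMulSeminorm_eq_zero_iff (hα : IsSeminormOn I α)
    (hmul : ∀ (a : A), ∀ x ∈ I, a * x ∈ I) (hb : BddAbove (leftMulValues I α a)) :
    leftMulSeminorm I α a = 0 ↔ ∀ x ∈ I, α (a * x) = 0 := by
  constructor
  · intro h x hx
    refine le_antisymm ?_ (hα.nonneg (hmul a x hx))
    simpa only [h, zero_mul] using apply_mul_le_leftMulSeminorm_mul hα hmul hb hx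
  · intro h
    refine le_antisymm (leftMulSeminorm_le le_rfl fun x hx => ?_) (leftMulSeminorm_nonneg hα hmul)
    rw [h x hx, zero_mul]

theorem leftMulSeminorm_eq_zero_iff_forall_mul_eq_zero (hα : IsSeminormOn I α)
    (hmul : ∀ (a : A), ∀ x ∈ I, a * x ∈ I) (hb : BddAbove (leftMulValues I α a))
    (hnorm : ∀ x ∈ I, α x = 0 → x = 0) :
    leftMulSeminorm I α a = 0 ↔ ∀ x ∈ I, a * x = 0 := by
  rw [leftMulSeminorm_eq_zero_iff hα hmul hb]
  exact forall₂_congr fun x hx =>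
    ⟨hnorm _ (hmul a x hx), fun h => by rw [h, hα.map_zero]⟩

theorem leftMulSeminorm_mul_le (hα : IsSeminormOn I α) (hmul : ∀ (a : A), ∀ x ∈ I, a * x ∈ I)
    (ha : BddAbove (leftMulValues I α a)) (hb : BddAbove (leftMulValues I α b)) :
    leftMulSeminorm I α (a * b) ≤ leftMulSeminorm I α a * leftMulSeminorm I α b := by
  have hα'_nonneg (c : A) : 0 ≤ leftMulSeminorm I α c := leftMulSeminorm_nonneg hα hmul
  refine leftMulSeminorm_le (mul_nonneg (hα'_nonneg a) (hα'_nonneg b)) fun x hx => ?_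
  calc α (a * b * x) = α (a * (b * x)) := by rw [mul_assoc]
    _ ≤ leftMulSeminorm I α a * α (b * x) :=
      apply_mul_le_leftMulSeminorm_mul hα hmul ha (hmul b x hx)
    _ ≤ leftMulSeminorm I α a * (leftMulSeminorm I α b * α x) :=
      mul_le_mul_of_nonneg_left (apply_mul_le_leftMulSeminorm_mul hα hmul hb hx)
        (hα'_nonneg a)
    _ = leftMulSeminorm I α a * leftMulSeminorm I α b * α x := by rw [mul_assoc]

theorem leftMulSeminorm_add_le (hα : IsSeminormOn I α) (hmul : ∀ (a : A), ∀ x ∈ I, a * x ∈ I)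
    (ha : BddAbove (leftMulValues I α a)) (hb : BddAbove (leftMulValues I α b)) :
    leftMulSeminorm I α (a + b) ≤ leftMulSeminorm I α a + leftMulSeminorm I α b := by
  refine leftMulSeminorm_le (add_nonneg (leftMulSeminorm_nonneg hα hmul)
    (leftMulSeminorm_nonneg hα hmul)) fun x hx => ?_
  calc α ((a + b) * x) = α (a * x + b * x) := by rw [add_mul]
    _ ≤ α (a * x) + α (b * x) := hα.add_le _ (hmul a x hx) _ (hmul b x hx)
    _ ≤ leftMulSeminorm I α a * α x + leftMulSeminorm I α b * α x :=
      add_le_add (apply_mul_le_leftMulSeminorm_mul hα hmul ha hx)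
        (apply_mul_le_leftMulSeminorm_mul hα hmul hb hx)
    _ = (leftMulSeminorm I α a + leftMulSeminorm I α b) * α x := by rw [add_mul]

theorem isSeminormOn_leftMulSeminorm [IsScalarTower 𝕜 A A] (hα : IsSeminormOn I α)
    (hmul : ∀ (a : A), ∀ x ∈ I, a * x ∈ I) (hb : ∀ a : A, BddAbove (leftMulValues I α a)) :
    IsSeminormOn (⊤ : Submodule 𝕜 A) (leftMulSeminorm I α) where
  add_le a _ b _ := leftMulSeminorm_add_le hα hmul (hb a) (hb b)
  smul c a _ := leftMulSeminorm_smul hα hmul c a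

variable [StarRing A]

theorem sq_leftMulSeminorm_le (hα : IsCStarSeminormOn I α) (hmul : ∀ (a : A), ∀ x ∈ I, a * x ∈ I)
    (hstar : ∀ x ∈ I, star x ∈ I) (hb : BddAbove (leftMulValues I α (star a * a))) :
    leftMulSeminorm I α a ^ 2 ≤ leftMulSeminorm I α (star a * a) := by
  have hα'_nonneg (c : A) : 0 ≤ leftMulSeminorm I α c :=
    leftMulSeminorm_nonneg hα.toIsSeminormOn hmul
  have sq_le (x : A) (hx : x ∈ I) :
      α (a * x) ^ 2 ≤ leftMulSeminorm I α (star a * a) * α x ^ 2 := by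
    calc α (a * x) ^ 2 = α (star (a * x) * (a * x)) := (hα.star_mul_self _ (hmul a x hx)).symm
      _ = α (star x * (star a * a * x)) := by simp only [star_mul, mul_assoc]
      _ ≤ α (star x) * α (star a * a * x) := hα.mul_le _ (hstar x hx) _ (hmul _ x hx)
      _ ≤ α x * (leftMulSeminorm I α (star a * a) * α x) := by
        rw [hα.map_star hstar hx]
        exact mul_le_mul_of_nonneg_left
          (apply_mul_le_leftMulSeminorm_mul hα.toIsSeminormOn hmul hb hx) (hα.nonneg hx)
      _ = leftMulSeminorm I α (star a * a) * α x ^ 2 := by ring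
  refine (Real.le_sqrt (hα'_nonneg a) (hα'_nonneg _)).1
    (leftMulSeminorm_le (Real.sqrt_nonneg _) fun x hx => ?_)
  rw [← Real.sqrt_sq (hα.nonneg hx), ← Real.sqrt_mul (hα'_nonneg _)]
  exact Real.le_sqrt_of_sq_le (sq_le x hx)

theorem isCStarSeminormOn_leftMulSeminorm [IsScalarTower 𝕜 A A] (hα : IsCStarSeminormOn I α)
    (hmul : ∀ (a : A), ∀ x ∈ I, a * x ∈ I) (hstar : ∀ x ∈ I, star x ∈ I)
    (hb : ∀ a : A, BddAbove (leftMulValues I α a)) :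
    IsCStarSeminormOn (⊤ : Submodule 𝕜 A) (leftMulSeminorm I α) :=
  .of_sq_le (isSeminormOn_leftMulSeminorm hα.toIsSeminormOn hmul hb) (fun _ _ => trivial)
    (fun a _ b _ => leftMulSeminorm_mul_le hα.toIsSeminormOn hmul (hb a) (hb b))
    (fun a _ => sq_leftMulSeminorm_le hα hmul hstar (hb (star a * a)))

theorem leftMulSeminorm_eq_of_mem (hα : IsCStarSeminormOn I α)
    (hmul : ∀ (a : A), ∀ x ∈ I, a * x ∈ I) (hstar : ∀ x ∈ I, star x ∈ I) (hx : x ∈ I) :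
    leftMulSeminorm I α x = α x := by
  have hα₀ : IsSeminormOn I α := hα.toIsSeminormOn
  have hx_bound : ∀ y ∈ I, α (x * y) ≤ α x * α y := hα.mul_le x hx
  refine le_antisymm (leftMulSeminorm_le (hα.nonneg hx) hx_bound) ?_
  refine le_of_sq_le_mul_self (leftMulSeminorm_nonneg hα₀ hmul) ?_
  calc α x ^ 2 = α (x * star x) := by
        simpa only [star_star, hα.map_star hstar hx] using
          (hα.star_mul_self _ (hstar x hx)).symm
    _ ≤ leftMulSeminorm I α x * α (star x) :=
      apply_mul_le_leftMulSeminorm_mul hα₀ hmul (bddAbove_leftMulValues hα₀ hx_bound)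
        (hstar x hx)
    _ = leftMulSeminorm I α x * α x := by rw [hα.map_star hstar hx]

end LeftMulSeminorm

theorem stmt_10_general {𝕜 A : Type*} [DenselyNormedField 𝕜] [NonUnitalRing A] [Module 𝕜 A]
    [StarRing A] [IsScalarTower 𝕜 A A] [SMulCommClass 𝕜 A A] (I : Submodule 𝕜 A)
    (hstar : ∀ x ∈ I, star x ∈ I) (hmul : ∀ (a : A), ∀ x ∈ I, a * x ∈ I)
    (α : A → ℝ) (hα : IsCStarSeminormOn I α) :
    ((∀ a : A, BddAbove (leftMulValues I α a)) ↔
      (∀ a : A, ∃ C : ℝ, ∀ x ∈ I, α (a * x) ≤ C * α x)) ∧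
    ((∀ a : A, ∃ C : ℝ, ∀ x ∈ I, α (a * x) ≤ C * α x) ↔
      (∃ β : A → ℝ, IsCStarSeminormOn (⊤ : Submodule 𝕜 A) β ∧ ∀ x ∈ I, β x = α x)) ∧
    ((∀ a : A, BddAbove (leftMulValues I α a)) →
      (IsCStarSeminormOn (⊤ : Submodule 𝕜 A) (leftMulSeminorm I α) ∧
        (∀ y ∈ I, leftMulSeminorm I α y = α y) ∧
        (∀ β : A → ℝ, IsCStarSeminormOn (⊤ : Submodule 𝕜 A) β → (∀ x ∈ I, β x = α x) →
          ∀ a : A, leftMulSeminorm I α a ≤ β a) ∧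
        ((∀ x ∈ I, α x = 0 → x = 0) →
          ((∀ a : A, leftMulSeminorm I α a = 0 → a = 0) ↔
            (∀ a : A, (∀ x ∈ I, a * x = 0) → a = 0))))) := by
  have hα₀ : IsSeminormOn I α := hα.toIsSeminormOn
  have bdd_iff : (∀ a : A, BddAbove (leftMulValues I α a)) ↔
      ∀ a : A, ∃ C : ℝ, ∀ x ∈ I, α (a * x) ≤ C * α x :=
    forall_congr' fun _ => bddAbove_leftMulValues_iff hα₀ hmul
  have extends_α (y : A) (hy : y ∈ I) : leftMulSeminorm I α y = α y :=
    leftMulSeminorm_eq_of_mem hα hmul hstar hy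
  have extension_bound {β : A → ℝ} (hβ : IsCStarSeminormOn (⊤ : Submodule 𝕜 A) β)
      (hext : ∀ x ∈ I, β x = α x) (a : A) : ∀ x ∈ I, α (a * x) ≤ β a * α x :=
    apply_mul_le_of_extends hmul (fun a b => hβ.mul_le a trivial b trivial) hext a
  refine ⟨bdd_iff, ⟨fun h => ?_, ?_⟩, fun hb => ⟨?_, extends_α, ?_, fun hnorm => ?_⟩⟩
  · exact ⟨_, isCStarSeminormOn_leftMulSeminorm hα hmul hstar (bdd_iff.2 h), extends_α⟩
  · rintro ⟨β, hβ, hext⟩ a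
    exact ⟨β a, extension_bound hβ hext a⟩
  · exact isCStarSeminormOn_leftMulSeminorm hα hmul hstar hb
  · exact fun β hβ hext a => leftMulSeminorm_le (hβ.nonneg trivial) (extension_bound hβ hext a)
  · exact forall_congr' fun a => imp_congr_left
      (leftMulSeminorm_eq_zero_iff_forall_mul_eq_zero hα₀ hmul (hb a) hnorm)

/-- Let `A` be a complex `*`-algebra, `I` a `*`-ideal of `A`
and `α` a `C*`-seminorm on `I`.  With `α'(a) := sup{α(ax) : x ∈ I, α(x) ≤ 1}`
and `L_a : I → I, x ↦ ax`, the following are equivalent: (1) `α'(a) < ∞` for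
all `a`; (2) every `L_a` is bounded; (3) `α` extends to a `C*`-seminorm on `A`.
In that case `α'` is a `C*`-seminorm on `A` extending `α` which is smaller than
every such extension, and if `α` is a norm on `I` then `α'` is a norm iff
`Ann_A(I) = 0`. -/
theorem stmt_10 {A : Type*} [NonUnitalRing A] [Module ℂ A] [StarRing A]
    [StarModule ℂ A] [IsScalarTower ℂ A A] [SMulCommClass ℂ A A]
    (I : Set A) (hzero : (0 : A) ∈ I)
    (hadd : ∀ x ∈ I, ∀ y ∈ I, x + y ∈ I)
    (hsmul : ∀ (c : ℂ), ∀ x ∈ I, c • x ∈ I)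
    (hstar : ∀ x ∈ I, star x ∈ I)
    (hmull : ∀ (a : A), ∀ x ∈ I, a * x ∈ I)
    (hmulr : ∀ (a : A), ∀ x ∈ I, x * a ∈ I)
    (α : A → ℝ)
    (hα_add : ∀ x ∈ I, ∀ y ∈ I, α (x + y) ≤ α x + α y)
    (hα_smul : ∀ (c : ℂ), ∀ x ∈ I, α (c • x) = ‖c‖ * α x)
    (hα_mul : ∀ x ∈ I, ∀ y ∈ I, α (x * y) ≤ α x * α y)
    (hα_star : ∀ x ∈ I, α (star x * x) = (α x) ^ 2) :
    -- the three conditions are equivalent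
    ((∀ a : A, BddAbove {s : ℝ | ∃ x ∈ I, α x ≤ 1 ∧ s = α (a * x)}) ↔
      (∀ a : A, ∃ C : ℝ, ∀ x ∈ I, α (a * x) ≤ C * α x)) ∧
    ((∀ a : A, ∃ C : ℝ, ∀ x ∈ I, α (a * x) ≤ C * α x) ↔
      (∃ β : A → ℝ, IsCStarSeminormAlg β ∧ ∀ x ∈ I, β x = α x)) ∧
    -- consequences, where `α' a = sSup {α (a * x) : x ∈ I, α x ≤ 1}`
    ((∀ a : A, BddAbove {s : ℝ | ∃ x ∈ I, α x ≤ 1 ∧ s = α (a * x)}) →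
      -- (a) `α'` is a `C*`-seminorm on `A` extending `α`, minimal among all
      -- `C*`-seminorm extensions of `α`
      (IsCStarSeminormAlg
          (fun a : A => sSup {s : ℝ | ∃ x ∈ I, α x ≤ 1 ∧ s = α (a * x)}) ∧
        (∀ y ∈ I, sSup {s : ℝ | ∃ x ∈ I, α x ≤ 1 ∧ s = α (y * x)} = α y) ∧
        (∀ β : A → ℝ, IsCStarSeminormAlg β → (∀ x ∈ I, β x = α x) →
          ∀ a : A, sSup {s : ℝ | ∃ x ∈ I, α x ≤ 1 ∧ s = α (a * x)} ≤ β a) ∧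
        -- (b) if `α` is a norm on `I`, then `α'` is a norm iff `Ann_A(I) = 0`
        ((∀ x ∈ I, α x = 0 → x = 0) →
          ((∀ a : A,
              sSup {s : ℝ | ∃ x ∈ I, α x ≤ 1 ∧ s = α (a * x)} = 0 → a = 0) ↔
            (∀ a : A, (∀ x ∈ I, a * x = 0) → a = 0))))) := by
  let J : Submodule ℂ A :=
    { carrier := I
      zero_mem' := hzero
      add_mem' := fun hx hy => hadd _ hx _ hy
      smul_mem' := fun c _ hx => hsmul c _ hx }
  have h := stmt_10_general J hstar hmull α ⟨⟨hα_add, hα_smul⟩, hα_mul, hα_star⟩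
  simp only [isCStarSeminormOn_top_iff] at h
  exact h
end
end
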